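/- arXiv:1009.3594 — 9 statements merged into one kernel-verified Lean document; each statement's English description precedes it below -/
import Mathlib

section
/- Let (X, d) be a finite metric space of data points. A k-median clustering of X is a partition of X into k nonempty clusters, each with a designated center that is a point of X, and its cost under a (possibly perturbed) distance function d' is the sum over all points p of d'(p, c) where c is the center of p's cluster. Suppose the instance is α-perturbation resilient for the k-median objective, i.e., for every function d' : X × X → ℝ≥0 with d(x,y) ≤ d'(x,y) ≤ α·d(x,y) for all x, y (an α-perturbation of d), every k-median-cost-minimizing clustering under d' induces the same partition of X as the (unique) optimal k-median clustering under d. Then the instance satisfies α-center proximity: for every point p, if c_i is the center of p's cluster in the optimal clustering under d and c_j is the center of any other cluster, then d(p, c_j) > α·d(p, c_i). -/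
/-!
Blow up by the factor `α` exactly the distances between points in a common optimal cluster, and
call the result `d'`. An optimal clustering for `d'` exists because `X` is finite, and by resilience
it has the optimal partition. Moreover each of its centers lies in its own cluster
(`center_mem_cluster`), so its `d'`-cost is `α` times its original cost, hence at least
`α` times the optimal cost, which is the `d'`-cost of `(σopt, copt)`. So `(σopt, copt)` is itself
optimal for `d'`.

If center proximity failed at `p` and `j`, then moving `p` to cluster `j` would not increase the
`d'`-cost, because `d' p (copt j) = dist p (copt j)` while
`d' p (copt (σopt p)) = α * dist p (copt (σopt p))`. The moved clustering would be optimal for `d'`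
with a different partition, contradicting resilience.
-/

/-- `(σ, c)` is a clustering into `k` nonempty clusters of minimal `k`-median cost under `d`. -/
def IsOptimalClustering {X : Type*} [Fintype X] {k : ℕ} (d : X → X → ℝ)
    (σ : X → Fin k) (c : Fin k → X) : Prop :=
  Function.Surjective σ ∧ ∀ (σ₂ : X → Fin k) (c₂ : Fin k → X), Function.Surjective σ₂ →
    ∑ p : X, d p (c (σ p)) ≤ ∑ p : X, d p (c₂ (σ₂ p))

lemma exists_isOptimalClustering {X : Type*} [Fintype X] {k : ℕ} (d : X → X → ℝ)
    (σ₀ : X → Fin k) (c₀ : Fin k → X) (h₀ : Function.Surjective σ₀) :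
    ∃ (σ : X → Fin k) (c : Fin k → X), IsOptimalClustering d σ c := by
  obtain ⟨⟨σ, c⟩, hσ, hmin⟩ := Set.exists_min_image
    {s : (X → Fin k) × (Fin k → X) | Function.Surjective s.1}
    (fun s => ∑ p : X, d p (s.2 (s.1 p))) (Set.toFinite _) ⟨(σ₀, c₀), h₀⟩
  exact ⟨σ, c, hσ, fun σ₂ c₂ h₂ => hmin (σ₂, c₂) h₂⟩

lemma surjective_update_of_exists_ne {X ι : Type*} [DecidableEq X] {σ : X → ι}
    (hσ : Function.Surjective σ) {y z : X} (hzy : z ≠ y) (hz : σ z = σ y) (j : ι) :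
    Function.Surjective (Function.update σ y j) := by
  intro l
  obtain ⟨x, rfl⟩ := hσ l
  by_cases hx : x = y
  · exact ⟨z, by simp [hzy, hz, hx]⟩
  · exact ⟨x, by simp [hx]⟩

/-- If the optimal partition under `d` is unique, then every center of an optimal clustering lies in
its own cluster. Uniqueness is needed since a center `y` of cluster `j` lying in another cluster
could be moved to `j` for free. That move is illegal only when `y` is alone in its cluster; then
some point `w` of `j` can become a singleton cluster while the rest of `j` joins `y`, which strictly
lowers the cost. -/
lemma center_mem_cluster {X : Type*} [Fintype X] {k : ℕ} {d : X → X → ℝ}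
    (hself : ∀ x, d x x = 0) (hpos : ∀ x y, x ≠ y → 0 < d x y)
    {σ : X → Fin k} {c : Fin k → X} (hopt : IsOptimalClustering d σ c)
    (huniq : ∀ (σ₂ : X → Fin k) (c₂ : Fin k → X), IsOptimalClustering d σ₂ c₂ →
      ∀ p q : X, σ₂ p = σ₂ q ↔ σ p = σ q)
    (j : Fin k) : σ (c j) = j := by
  classical
  by_contra hne
  have hnonneg : ∀ x y, 0 ≤ d x y := fun x y => by
    by_cases h : x = y
    · rw [h, hself]
    · exact (hpos x y h).le
  obtain ⟨hsurj, hmin⟩ := hopt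
  obtain ⟨w, hw⟩ := hsurj j
  have hwy : w ≠ c j := fun h => hne (h ▸ hw)
  by_cases hex : ∃ z, z ≠ c j ∧ σ z = σ (c j)
  · obtain ⟨z, hzy, hz⟩ := hex
    have hle : ∑ x : X, d x (c (Function.update σ (c j) j x)) ≤ ∑ x : X, d x (c (σ x)) := by
      refine Finset.sum_le_sum fun x _ => ?_
      by_cases hx : x = c j
      · subst hx
        simpa [hself] using hnonneg _ _
      · simp [hx]
    have := (huniq (Function.update σ (c j) j) c
      ⟨surjective_update_of_exists_ne hsurj hzy hz j,
        fun σ₂ c₂ h₂ => hle.trans (hmin σ₂ c₂ h₂)⟩ w (c j)).1 (by simp [hwy, hw])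
    exact hne (this.symm.trans hw)
  · push Not at hex
    set m := σ (c j) with hm
    let σ₂ : X → Fin k := fun x => if x = w then j else if σ x = j then m else σ x
    let c₂ : Fin k → X := Function.update (Function.update c m (c j)) j w
    have hsurj₂ : Function.Surjective σ₂ := by
      intro l
      by_cases hl : l = j
      · exact ⟨w, by simp [σ₂, hl]⟩
      · obtain ⟨x, hx⟩ := hsurj l
        have hxw : x ≠ w := by
          rintro rfl
          exact hl (hx.symm.trans hw)
        exact ⟨x, by simp [σ₂, hxw, hx, hl]⟩
    refine absurd (hmin σ₂ c₂ hsurj₂) (not_le.2 ?_)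
    refine Finset.sum_lt_sum (fun x _ => ?_) ⟨w, Finset.mem_univ _, ?_⟩
    · by_cases hxw : x = w
      · simpa [σ₂, c₂, hxw, hself] using hnonneg _ _
      · by_cases hxj : σ x = j
        · simp [σ₂, c₂, hxw, hxj, hne]
        · by_cases hxm : σ x = m
          · have hxy : x = c j := by
              by_contra h
              exact hex x h hxm
            have h0 : d x (c₂ (σ₂ x)) = 0 := by
              have : c₂ (σ₂ x) = x := by
                simp only [σ₂, c₂, if_neg hxw, hxm, ite_self]
                rw [Function.update_of_ne hne, Function.update_self, hxy]
              rw [this, hself]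
            rw [h0]
            exact hnonneg _ _
          · simp [σ₂, c₂, hxw, hxj, hxm]
    · simpa [σ₂, c₂, hself, hw] using hpos w (c j) hwy


/-- **α-perturbation resilience implies α-center proximity, for the k-median objective
with data-point centers.**

A clustering of a finite metric space `X` into `k` nonempty clusters is modeled by a
surjective assignment `σ : X → Fin k` together with centers `c : Fin k → X`. Its
k-median cost under a distance function `d'` is `∑ p, d' p (c (σ p))`.

Hypotheses: `σopt, copt` is a k-median-cost-minimizing clustering under the metric `d = dist`,
and for every α-perturbation `d'` of `dist` (i.e. `dist x y ≤ d' x y ≤ α * dist x y`),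
every cost-minimizing clustering under `d'` induces the same partition of `X` as `σopt`.

Conclusion: α-center proximity holds for the optimal clustering: for every point `p` and
every cluster index `j` other than that of `p`'s cluster,
`dist p (copt j) > α * dist p (copt (σopt p))`. -/
theorem perturbation_resilience_implies_center_proximity_kmedian
    {X : Type*} [Fintype X] [MetricSpace X]
    (k : ℕ) (α : ℝ) (hα : 1 < α)
    (σopt : X → Fin k) (copt : Fin k → X)
    (hopt_surj : Function.Surjective σopt)
    (hopt_min : ∀ (σ : X → Fin k) (c : Fin k → X), Function.Surjective σ →
      ∑ p : X, dist p (copt (σopt p)) ≤ ∑ p : X, dist p (c (σ p)))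
    (hresilient : ∀ d' : X → X → ℝ,
      (∀ x y : X, dist x y ≤ d' x y ∧ d' x y ≤ α * dist x y) →
      ∀ (σ : X → Fin k) (c : Fin k → X), Function.Surjective σ →
        (∀ (σ₂ : X → Fin k) (c₂ : Fin k → X), Function.Surjective σ₂ →
          ∑ p : X, d' p (c (σ p)) ≤ ∑ p : X, d' p (c₂ (σ₂ p))) →
        ∀ p q : X, σ p = σ q ↔ σopt p = σopt q)
    (p : X) (j : Fin k) (hj : j ≠ σopt p) :
    dist p (copt j) > α * dist p (copt (σopt p)) := by
  classical
  have hα0 : 0 < α := one_pos.trans hα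
  -- Resilience applied to `dist` itself places each `copt l` in cluster `l`.
  have hcopt : ∀ l, σopt (copt l) = l := by
    refine center_mem_cluster (d := fun x y => dist x y) (fun x => dist_self x)
      (fun x y h => dist_pos.2 h) ⟨hopt_surj, hopt_min⟩ fun σ₂ c₂ h₂ => ?_
    exact hresilient _ (fun x y => ⟨le_rfl, le_mul_of_one_le_left dist_nonneg hα.le⟩) σ₂ c₂ h₂.1 h₂.2
  let d' : X → X → ℝ := fun x y => if σopt x = σopt y then α * dist x y else dist x y
  have hd' : ∀ x y, dist x y ≤ d' x y ∧ d' x y ≤ α * dist x y := by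
    intro x y
    have h : dist x y ≤ α * dist x y := le_mul_of_one_le_left dist_nonneg hα.le
    by_cases hxy : σopt x = σopt y <;> simp [d', hxy, h]
  have hsame : ∀ x y, σopt x = σopt y → d' x y = α * dist x y := fun x y h => if_pos h
  obtain ⟨σ, c, hσc⟩ := exists_isOptimalClustering d' σopt copt hopt_surj
  have hpart := hresilient d' hd' σ c hσc.1 hσc.2
  have hc : ∀ l, σ (c l) = l := by
    refine center_mem_cluster (d := d') (fun x => by simp [d'])
      (fun x y h => (dist_pos.2 h).trans_le (hd' x y).1) hσc fun σ₂ c₂ h₂ x y => ?_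
    exact (hresilient d' hd' σ₂ c₂ h₂.1 h₂.2 x y).trans (hpart x y).symm
  have hcost : ∑ x : X, d' x (copt (σopt x)) ≤ ∑ x : X, d' x (c (σ x)) := by
    have h₁ : ∀ x, d' x (copt (σopt x)) = α * dist x (copt (σopt x)) :=
      fun x => hsame _ _ (hcopt _).symm
    have h₂ : ∀ x, d' x (c (σ x)) = α * dist x (c (σ x)) :=
      fun x => hsame _ _ ((hpart _ _).1 (hc _).symm)
    simp only [h₁, h₂, ← Finset.mul_sum]
    exact mul_le_mul_of_nonneg_left (hopt_min σ c hσc.1) hα0.le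
  by_contra hcon
  have hle : dist p (copt j) ≤ α * dist p (copt (σopt p)) := not_lt.1 hcon
  have hjp : copt j ≠ p := fun h => hj (by rw [← h, hcopt])
  have hip : copt (σopt p) ≠ p := by
    intro h
    rw [h, dist_self, mul_zero] at hle
    exact hjp (dist_le_zero.1 hle).symm
  have hmove : ∑ x : X, d' x (copt (Function.update σopt p j x)) ≤
      ∑ x : X, d' x (copt (σopt x)) := by
    refine Finset.sum_le_sum fun x _ => ?_
    by_cases hx : x = p
    · subst hx
      simpa [d', hcopt, hj.symm] using hle
    · simp [hx]
  have := (hresilient d' hd' (Function.update σopt p j) copt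
    (surjective_update_of_exists_ne hopt_surj hip (hcopt _) j)
    (fun σ₂ c₂ h₂ => (hmove.trans hcost).trans (hσc.2 σ₂ c₂ h₂)) p (copt j)).1
    (by simp [hjp, hcopt])
  exact hj (this.trans (hcopt j)).symm
end

section
/- Let (X, d) be a finite metric space of data points. A k-means (k-medoid) clustering of X is a partition of X into k nonempty clusters, each with a designated center that is a point of X, and its cost under a (possibly perturbed) distance function d' is the sum over all points p of d'(p, c)² where c is the center of p's cluster. Suppose the instance is α-perturbation resilient for this objective, i.e., for every function d' : X × X → ℝ≥0 with d(x,y) ≤ d'(x,y) ≤ α·d(x,y) for all x, y, every cost-minimizing clustering under d' induces the same partition of X as the (unique) optimal clustering under d. Then for every point p, if c_i is the center of p's cluster in the optimal clustering under d and c_j is the center of any other cluster, then d(p, c_j) > α·d(p, c_i). -/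
/-!
Write `i` for the cluster of `p`, and suppose `dist p (copt j) ≤ α * dist p (copt i)`.

If `i` has a second point, moving a single point of `i` to another cluster keeps all clusters
nonempty and changes the partition, so resilience makes such a move strictly costly, for every
perturbation under which `(σopt, copt)` is optimal (`lt_of_optimal`). Applied to `dist` itself,
this says that each point of `i` is strictly closest to `copt i`. Let `d'` be `α * dist`, except
that `d' p (copt j) = α * dist p (copt i)`; this is an α-perturbation. By resilience an optimum
for `d'` has the partition of `σopt`, hence is `(σopt, c)` for some centers `c`. The modified
pair only matters if `c i = copt j`, and in that case replacing `c i` by `copt i` does not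
increase the cost, so `(σopt, copt)` is optimal for `d'`. But then moving `p` to `j` is free,
which contradicts `lt_of_optimal`.

If `i = {p}`, then `copt i = p` by optimality (`center_of_singleton`), and the claim reduces to
`copt j ≠ p`. Otherwise a point `q` of cluster `j` would either be alone, forcing `copt j = q`,
or could be moved to `i` at no cost.
-/

/-- If a perturbation `d'` has `(σopt, copt)` as an optimum and all optima for `d'` have the same
partition, then a point `q` that is not alone in its cluster is strictly closer to its own center
than to any other: otherwise moving `q` gives an optimum with a different partition. -/
lemma lt_of_optimal {X : Type*} [Fintype X] {k : ℕ} {σopt : X → Fin k} {copt : Fin k → X}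
    (hsurj : Function.Surjective σopt) (d' : X → X → ℝ) (hnonneg : ∀ x y, 0 ≤ d' x y)
    (hmin : ∀ (σ : X → Fin k) (c : Fin k → X), Function.Surjective σ →
      ∑ p : X, (d' p (copt (σopt p)))^2 ≤ ∑ p : X, (d' p (c (σ p)))^2)
    (hres : ∀ (σ : X → Fin k) (c : Fin k → X), Function.Surjective σ →
        (∀ (σ₂ : X → Fin k) (c₂ : Fin k → X), Function.Surjective σ₂ →
          ∑ p : X, (d' p (c (σ p)))^2 ≤ ∑ p : X, (d' p (c₂ (σ₂ p)))^2) →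
        ∀ p q : X, σ p = σ q ↔ σopt p = σopt q)
    {q q' : X} (hne : q' ≠ q) (hσ : σopt q' = σopt q) {l : Fin k} (hl : l ≠ σopt q) :
    d' q (copt (σopt q)) < d' q (copt l) := by
  classical
  by_contra! hle
  have hs : Function.Surjective (Function.update σopt q l) := by
    intro m
    obtain ⟨x, hx⟩ := hsurj m
    by_cases hxq : x = q
    · exact ⟨q', by rw [Function.update_of_ne hne, hσ, ← hxq, hx]⟩
    · exact ⟨x, by rw [Function.update_of_ne hxq, hx]⟩
  have hcost : ∑ x : X, (d' x (copt (Function.update σopt q l x)))^2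
      ≤ ∑ x : X, (d' x (copt (σopt x)))^2 := by
    refine Finset.sum_le_sum fun x _ => pow_le_pow_left₀ (hnonneg _ _) ?_ 2
    by_cases hxq : x = q
    · subst hxq
      simpa using hle
    · rw [Function.update_of_ne hxq]
  have h := (hres _ copt hs (fun σ₂ c₂ h₂ => hcost.trans (hmin σ₂ c₂ h₂)) q' q).2 hσ
  rw [Function.update_of_ne hne, Function.update_self, hσ] at h
  exact hl h.symm

lemma center_of_singleton {X : Type*} [Fintype X] [MetricSpace X] {k : ℕ} {σopt : X → Fin k}
    {copt : Fin k → X} (hsurj : Function.Surjective σopt)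
    (hmin : ∀ (σ : X → Fin k) (c : Fin k → X), Function.Surjective σ →
      ∑ p : X, (dist p (copt (σopt p)))^2 ≤ ∑ p : X, (dist p (c (σ p)))^2)
    {q : X} (hq : ∀ q', σopt q' = σopt q → q' = q) : copt (σopt q) = q := by
  classical
  by_contra hne
  refine (hmin σopt (Function.update copt (σopt q) q) hsurj).not_gt ?_
  refine Finset.sum_lt_sum (fun x _ => ?_) ⟨q, Finset.mem_univ _, ?_⟩
  · by_cases hx : σopt x = σopt q
    · rw [hq x hx, Function.update_self, dist_self, zero_pow two_ne_zero]
      positivity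
    · rw [Function.update_of_ne hx]
  · rw [Function.update_self, dist_self, zero_pow two_ne_zero]
    have : 0 < dist q (copt (σopt q)) := dist_pos.2 (Ne.symm hne)
    positivity

/-- **α-perturbation resilience implies α-center proximity, for the k-means objective
with data-point centers.**

A clustering of a finite metric space `X` into `k` nonempty clusters is modeled by a
surjective assignment `σ : X → Fin k` together with centers `c : Fin k → X`. Its
k-means cost under a distance function `d'` is `∑ p, d' p (c (σ p))`.

Hypotheses: `σopt, copt` is a k-means-cost-minimizing clustering under the metric `d = dist`,
and for every α-perturbation `d'` of `dist` (i.e. `dist x y ≤ d' x y ≤ α * dist x y`),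
every cost-minimizing clustering under `d'` induces the same partition of `X` as `σopt`.

Conclusion: α-center proximity holds for the optimal clustering: for every point `p` and
every cluster index `j` other than that of `p`'s cluster,
`dist p (copt j) > α * dist p (copt (σopt p))`. -/
theorem perturbation_resilience_implies_center_proximity_kmeans
    {X : Type*} [Fintype X] [MetricSpace X]
    (k : ℕ) (α : ℝ) (hα : 1 < α)
    (σopt : X → Fin k) (copt : Fin k → X)
    (hopt_surj : Function.Surjective σopt)
    (hopt_min : ∀ (σ : X → Fin k) (c : Fin k → X), Function.Surjective σ →
      ∑ p : X, (dist p (copt (σopt p)))^2 ≤ ∑ p : X, (dist p (c (σ p)))^2)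
    (hresilient : ∀ d' : X → X → ℝ,
      (∀ x y : X, dist x y ≤ d' x y ∧ d' x y ≤ α * dist x y) →
      ∀ (σ : X → Fin k) (c : Fin k → X), Function.Surjective σ →
        (∀ (σ₂ : X → Fin k) (c₂ : Fin k → X), Function.Surjective σ₂ →
          ∑ p : X, (d' p (c (σ p)))^2 ≤ ∑ p : X, (d' p (c₂ (σ₂ p)))^2) →
        ∀ p q : X, σ p = σ q ↔ σopt p = σopt q)
    (p : X) (j : Fin k) (hj : j ≠ σopt p) :
    dist p (copt j) > α * dist p (copt (σopt p)) := by
  classical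
  have hpert : ∀ x y : X, dist x y ≤ dist x y ∧ dist x y ≤ α * dist x y := fun x y =>
    ⟨le_rfl, le_mul_of_one_le_left dist_nonneg hα.le⟩
  have hnear : ∀ {q q' : X}, q' ≠ q → σopt q' = σopt q → ∀ {l : Fin k}, l ≠ σopt q →
      dist q (copt (σopt q)) < dist q (copt l) := fun hne hσ _ hl =>
    lt_of_optimal hopt_surj dist (fun _ _ => dist_nonneg) hopt_min (hresilient dist hpert)
      hne hσ hl
  by_cases hsing : ∀ q', σopt q' = σopt p → q' = p
  · have hp := center_of_singleton hopt_surj hopt_min hsing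
    rw [hp, dist_self, mul_zero]
    refine dist_pos.2 fun hpj => ?_
    obtain ⟨q, rfl⟩ := hopt_surj j
    by_cases hq : ∀ q', σopt q' = σopt q → q' = q
    · have := center_of_singleton hopt_surj hopt_min hq
      exact hj (by rw [hpj, this])
    · push Not at hq
      obtain ⟨q', hσ, hne⟩ := hq
      have := hnear hne hσ hj.symm
      rw [hp, ← hpj] at this
      exact lt_irrefl _ this
  push Not at hsing
  obtain ⟨p', hσp, hp'⟩ := hsing
  by_contra! hle
  have hα0 : 0 < α := by linarith
  have hpj := hnear hp' hσp hj
  have hcne : copt (σopt p) ≠ copt j := fun h => by rw [h] at hpj; exact lt_irrefl _ hpj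
  -- Every point of the cluster of `p` has a companion in it: `p'` for `p`, and `p` for the others.
  have hnear_i : ∀ x, σopt x = σopt p → dist x (copt (σopt p)) ≤ dist x (copt j) := by
    intro x hx
    by_cases hxp : x = p
    · rw [hxp]
      exact hpj.le
    · have := hnear (Ne.symm hxp) hx.symm (l := j) (by rwa [hx])
      rw [hx] at this
      exact this.le
  set d' : X → X → ℝ := fun x y =>
    if x = p ∧ y = copt j then α * dist p (copt (σopt p)) else α * dist x y with hd'
  have hd'pert : ∀ x y : X, dist x y ≤ d' x y ∧ d' x y ≤ α * dist x y := by
    intro x y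
    by_cases h : x = p ∧ y = copt j
    · simp only [hd', if_pos h]
      rw [h.1, h.2]
      exact ⟨hle, mul_le_mul_of_nonneg_left hpj.le hα0.le⟩
    · simp only [hd', if_neg h]
      exact ⟨(hpert x y).2, le_rfl⟩
  have hd'nonneg : ∀ x y, 0 ≤ d' x y := fun x y => dist_nonneg.trans (hd'pert x y).1
  have hd'opt : ∀ x, d' x (copt (σopt x)) = α * dist x (copt (σopt x)) := by
    intro x
    refine if_neg ?_
    rintro ⟨rfl, h⟩
    exact hcne h
  have hmin' : ∀ (σ : X → Fin k) (c : Fin k → X), Function.Surjective σ →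
      ∑ x : X, (d' x (copt (σopt x)))^2 ≤ ∑ x : X, (d' x (c (σ x)))^2 := by
    obtain ⟨⟨σ', c'⟩, hs', hm'⟩ := Set.exists_min_image
      {s : (X → Fin k) × (Fin k → X) | Function.Surjective s.1}
      (fun s => ∑ x : X, (d' x (s.2 (s.1 x)))^2) (Set.toFinite _) ⟨(σopt, copt), hopt_surj⟩
    have hpart := hresilient d' hd'pert σ' c' hs' (fun σ₂ c₂ h₂ => hm' (σ₂, c₂) h₂)
    intro σ c hσ
    refine le_trans ?_ (hm' (σ, c) hσ)
    -- `c''` lists the centers `c'` with the cluster labels of `σopt`.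
    obtain ⟨r, hr⟩ := hopt_surj.hasRightInverse
    set c'' : Fin k → X := fun m => c' (σ' (r m)) with hc''
    have hrel : ∀ x, c' (σ' x) = c'' (σopt x) := fun x =>
      congrArg c' ((hpart x (r (σopt x))).2 (hr _).symm)
    set c₃ : Fin k → X := fun m =>
      if m = σopt p ∧ c'' m = copt j then copt (σopt p) else c'' m with hc₃
    calc ∑ x : X, (d' x (copt (σopt x)))^2
        = α^2 * ∑ x : X, (dist x (copt (σopt x)))^2 := by
          rw [Finset.mul_sum]
          exact Finset.sum_congr rfl fun x _ => by rw [hd'opt, mul_pow]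
      _ ≤ α^2 * ∑ x : X, (dist x (c₃ (σopt x)))^2 :=
          mul_le_mul_of_nonneg_left (hopt_min σopt c₃ hopt_surj) (by positivity)
      _ = ∑ x : X, (α * dist x (c₃ (σopt x)))^2 := by
          rw [Finset.mul_sum]
          exact Finset.sum_congr rfl fun x _ => by rw [mul_pow]
      _ ≤ ∑ x : X, (d' x (c' (σ' x)))^2 := by
          refine Finset.sum_le_sum fun x _ => pow_le_pow_left₀ (by positivity) ?_ 2
          rw [hrel]
          by_cases h : σopt x = σopt p ∧ c'' (σopt x) = copt j
          · simp only [hc₃, if_pos h]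
            rw [h.2]
            by_cases hxp : x = p
            · simp [hd', hxp]
            · simp only [hd', hxp, false_and, if_false]
              exact mul_le_mul_of_nonneg_left (hnear_i x h.1) hα0.le
          · have h' : ¬ (x = p ∧ c'' (σopt x) = copt j) := fun hx => h ⟨by rw [hx.1], hx.2⟩
            simp only [hc₃, hd', if_neg h, if_neg h', le_refl]
  have hlt := lt_of_optimal hopt_surj d' hd'nonneg hmin' (hresilient d' hd'pert) hp' hσp hj
  rw [hd'opt] at hlt
  simp [hd'] at hlt
end

section
/- Let (M, d) be a metric space, let α > 1 be a real number, and let p, c_i, p', c_j ∈ M be points satisfying d(p, c_j) > α·d(p, c_i) and d(p', c_i) > α·d(p', c_j). Then d(p, p') > (α − 1)·d(p, c_i). -/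
/-- **Pairwise consequence of α-center proximity (Corollary 2 of the paper).**

If `p` satisfies center proximity with respect to its own center `c_i` versus another
center `c_j`, and `p'` satisfies it with respect to its center `c_j` versus `c_i`, then
`d(p, p') > (α - 1) · d(p, c_i)`. -/
theorem dist_points_different_clusters
    {M : Type*} [MetricSpace M] (α : ℝ) (hα : 1 < α)
    (p ci p' cj : M)
    (h1 : dist p cj > α * dist p ci)
    (h2 : dist p' ci > α * dist p' cj) :
    dist p p' > (α - 1) * dist p ci := by
  have t1 : dist p cj ≤ dist p p' + dist p' cj := dist_triangle _ _ _
  have t2 : dist p' ci ≤ dist p p' + dist p ci := by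
    simpa only [dist_comm p' p] using dist_triangle p' p ci
  -- The point farther from its own center supplies the proximity inequality that is used.
  rcases le_total (dist p' cj) (dist p ci) with h | h
  · linarith
  · have : α * dist p ci ≤ α * dist p' cj := by gcongr
    linarith
end

section
/- Let (M, d) be a metric space and let X ⊆ M be a finite set of points partitioned into k nonempty clusters C_1, …, C_k, each cluster C_i having a designated center c_i ∈ C_i (centers are data points). Suppose α ≥ 3 and the α-center proximity property holds: for every index i, every p ∈ C_i, and every j ≠ i, d(p, c_j) > α·d(p, c_i). Then for any two distinct clusters C_i, C_j, any nonempty proper subset A ⊊ C_i, and any nonempty subset A' ⊆ C_j, the minimum distance from A to C_i \ A is strictly smaller than the minimum distance from A to A'; in particular the clustering satisfies min-stability: d_min(A, C_i \ A) ≤ d_min(A, C_j). -/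
/-!
Let `p ∈ A` and `q ∈ A'` realise `D = d_min(A, A')`, and put `x = d(p, c i)`, `y = d(q, c j)`.
Proximity and the triangle inequality give `D > 3x - y` and `D > 3y - x`, whence `2x < D` and
`2y < D`. If `c i ∉ A`, the pair `(p, c i)` crosses from `A` to `C i \ A` at distance `x < D`.
If `c i ∈ A`, pick any `b ∈ C i \ A` and put `z = d(b, c i)`; then
`3z < d(b, c j) ≤ z + x + D + y < z + 2D`, so the crossing pair `(c i, b)` has distance `z < D`.
-/

/-- The minimum distance `d_min(A, B) = min { d(a,b) : a ∈ A, b ∈ B }` between two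
(nonempty, finite) sets of points of a metric space. -/
noncomputable def dmin {M : Type*} [MetricSpace M] (A B : Finset M) : ℝ :=
  sInf {r : ℝ | ∃ a ∈ A, ∃ b ∈ B, r = dist a b}

theorem dmin_le_dist {M : Type*} [MetricSpace M] {A B : Finset M} {a b : M}
    (ha : a ∈ A) (hb : b ∈ B) : dmin A B ≤ dist a b := by
  refine csInf_le ⟨0, ?_⟩ ⟨a, ha, b, hb, rfl⟩
  rintro r ⟨x, -, y, -, rfl⟩
  exact dist_nonneg

/-- For nonempty finite sets the infimum defining `dmin` is attained. -/
theorem exists_dmin_eq_dist {M : Type*} [MetricSpace M] {A B : Finset M}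
    (hA : A.Nonempty) (hB : B.Nonempty) : ∃ a ∈ A, ∃ b ∈ B, dmin A B = dist a b := by
  obtain ⟨⟨a, b⟩, hab, hmin⟩ :=
    Finset.exists_min_image (A ×ˢ B) (fun z => dist z.1 z.2) (hA.product hB)
  rw [Finset.mem_product] at hab
  refine ⟨a, hab.1, b, hab.2, le_antisymm (dmin_le_dist hab.1 hab.2) ?_⟩
  refine le_csInf ⟨_, a, hab.1, b, hab.2, rfl⟩ ?_
  rintro r ⟨x, hx, y, hy, rfl⟩
  exact hmin (x, y) (Finset.mem_product.2 ⟨hx, hy⟩)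

/-- **3-center proximity implies min-stability when centers are data points
(Lemma 5 of the paper).**

Let a finite set of points of a metric space `M` be partitioned into `k` nonempty,
pairwise disjoint clusters `C 1, …, C k`, each with a designated center `c i ∈ C i`.
If `α ≥ 3` and the α-center proximity property holds (every point is more than a factor
`α` closer to its own center than to any other center), then for any two distinct
clusters `C i, C j`, any nonempty proper subset `A ⊊ C i` and any nonempty
`A' ⊆ C j`, we have `d_min(A, C i \ A) < d_min(A, A')`; in particular min-stability
holds: `d_min(A, C i \ A) ≤ d_min(A, C j)`. -/
theorem center_proximity_implies_min_stability_data_centers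
    {M : Type*} [MetricSpace M] [DecidableEq M] (k : ℕ) (α : ℝ) (hα : 3 ≤ α)
    (C : Fin k → Finset M) (c : Fin k → M)
    (hne : ∀ i, (C i).Nonempty)
    (hdisj : ∀ i j, i ≠ j → Disjoint (C i) (C j))
    (hcen : ∀ i, c i ∈ C i)
    (hprox : ∀ i, ∀ p ∈ C i, ∀ j, j ≠ i → dist p (c j) > α * dist p (c i))
    (i j : Fin k) (hij : i ≠ j)
    (A : Finset M) (hA : A ⊂ C i) (hAne : A.Nonempty) :
    (∀ A' : Finset M, A' ⊆ C j → A'.Nonempty → dmin A (C i \ A) < dmin A A') ∧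
      dmin A (C i \ A) ≤ dmin A (C j) := by
  have key : ∀ A' : Finset M, A' ⊆ C j → A'.Nonempty → dmin A (C i \ A) < dmin A A' := by
    intro A' hA' hA'ne
    obtain ⟨p, hp, q, hq, hpq⟩ := exists_dmin_eq_dist hAne hA'ne
    rw [hpq]
    have prox3 : ∀ m n, n ≠ m → ∀ r ∈ C m, 3 * dist r (c m) < dist r (c n) :=
      fun m n hmn r hr =>
        (mul_le_mul_of_nonneg_right hα dist_nonneg).trans_lt (hprox m r hr n hmn)
    have h1 := prox3 i j hij.symm p (hA.1 hp)
    have h2 := prox3 j i hij q (hA' hq)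
    have h3 := dist_triangle p q (c j)
    have h4 := dist_triangle_left q (c i) p
    by_cases hc : c i ∈ A
    · obtain ⟨b, hb, hbA⟩ := Finset.exists_of_ssubset hA
      refine (dmin_le_dist hc (Finset.mem_sdiff.2 ⟨hb, hbA⟩)).trans_lt ?_
      have h5 := prox3 i j hij.symm b hb
      have h6 := dist_triangle4 b (c i) p (c j)
      rw [dist_comm (c i) p] at h6
      rw [dist_comm (c i) b]
      linarith
    · refine (dmin_le_dist hp (Finset.mem_sdiff.2 ⟨hcen i, hc⟩)).trans_lt ?_
      linarith [dist_nonneg (x := p) (y := c i)]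
  exact ⟨key, (key (C j) subset_rfl (hne j)).le⟩
end

section
/- Let (M, d) be a metric space and let X ⊆ M be a finite set of points partitioned into k nonempty clusters C_1, …, C_k, each cluster C_i having a designated center c_i ∈ M (centers need not be data points). Suppose α ≥ 2 + √3 and the α-center proximity property holds: for every index i, every p ∈ C_i, and every j ≠ i, d(p, c_j) > α·d(p, c_i). Then for any two distinct clusters C_i, C_j, any nonempty proper subset A ⊊ C_i, and any nonempty subset A' ⊆ C_j, the minimum distance from A to C_i \ A is strictly smaller than the minimum distance from A to A'; in particular the clustering satisfies min-stability: d_min(A, C_i \ A) ≤ d_min(A, C_j). -/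
/-- Here `p, q` belong to the cluster centered at `c` and `p'` to the one centered at `c'`. -/
theorem dist_lt_of_center_proximity {M : Type*} [MetricSpace M] {α : ℝ}
    (hα : 2 + Real.sqrt 3 ≤ α) {p q p' c c' : M}
    (hp : α * dist p c < dist p c') (hq : α * dist q c < dist q c')
    (hp' : α * dist p' c' < dist p' c) : dist p q < dist p p' := by
  have h3 : Real.sqrt 3 ^ 2 = 3 := Real.sq_sqrt (by norm_num)
  have h0 : 0 ≤ Real.sqrt 3 := Real.sqrt_nonneg 3
  have hquad : 0 ≤ α ^ 2 - 4 * α + 1 := by nlinarith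
  have t1 : dist p c' ≤ dist p p' + dist p' c' := dist_triangle _ _ _
  have t2 : dist p' c ≤ dist p p' + dist p c := by
    simpa [dist_comm p' p] using dist_triangle p' p c
  have t3 : dist q c' ≤ dist q c + dist p c + dist p c' := by
    simpa [dist_comm c p] using dist_triangle4 q c p c'
  have t4 : dist p q ≤ dist p c + dist q c := dist_triangle_right _ _ _
  have hD : 0 ≤ dist p p' := dist_nonneg
  generalize dist p p' = D at *
  generalize dist p c = x at *
  generalize dist p' c' = y at *
  generalize dist q c = z at *
  have hβ : 0 < α - 1 := by linarith
  have hx : (α - 1) * x < D := by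
    have : (α + 1) * ((α - 1) * x) < (α + 1) * D := by nlinarith
    exact lt_of_mul_lt_mul_left this (by linarith)
  have hy : (α - 1) * y < D := by
    have : (α + 1) * ((α - 1) * y) < (α + 1) * D := by nlinarith
    exact lt_of_mul_lt_mul_left this (by linarith)
  have hz : (α - 1) * z < x + y + D := by linarith
  have hz' : (α - 1) * ((α - 1) * z) < (α - 1) * (x + y + D) := mul_lt_mul_of_pos_left hz hβ
  have hx' : (α - 1) * ((α - 1) * x) < (α - 1) * D := mul_lt_mul_of_pos_left hx hβ
  have hfin : (α - 1) ^ 2 * (x + z) < (α - 1) ^ 2 * D := by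
    nlinarith [mul_nonneg hquad hD]
  exact t4.trans_lt (lt_of_mul_lt_mul_left hfin (sq_nonneg _))

/-- **(2+√3)-center proximity implies min-stability for general metrics, where centers
need not be data points (Lemma 6 of the paper).**

Let a finite set of points of a metric space `M` be partitioned into `k` nonempty,
pairwise disjoint clusters `C 1, …, C k`, each with a designated center `c i ∈ M`
(possibly a Steiner point). If `α ≥ 2 + √3` and the α-center proximity property holds
(every point is more than a factor `α` closer to its own center than to any other
center), then for any two distinct clusters `C i, C j`, any nonempty proper subset
`A ⊊ C i` and any nonempty `A' ⊆ C j`, we have `d_min(A, C i \ A) < d_min(A, A')`;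
in particular min-stability holds: `d_min(A, C i \ A) ≤ d_min(A, C j)`. -/
theorem center_proximity_implies_min_stability_general_centers
    {M : Type*} [MetricSpace M] [DecidableEq M] (k : ℕ) (α : ℝ)
    (hα : 2 + Real.sqrt 3 ≤ α)
    (C : Fin k → Finset M) (c : Fin k → M)
    (hne : ∀ i, (C i).Nonempty)
    (hdisj : ∀ i j, i ≠ j → Disjoint (C i) (C j))
    (hprox : ∀ i, ∀ p ∈ C i, ∀ j, j ≠ i → dist p (c j) > α * dist p (c i))
    (i j : Fin k) (hij : i ≠ j)
    (A : Finset M) (hA : A ⊂ C i) (hAne : A.Nonempty) :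
    (∀ A' : Finset M, A' ⊆ C j → A'.Nonempty → dmin A (C i \ A) < dmin A A') ∧
      dmin A (C i \ A) ≤ dmin A (C j) := by
  have key : ∀ A' : Finset M, A' ⊆ C j → A'.Nonempty → dmin A (C i \ A) < dmin A A' := by
    intro A' hA' hne'
    obtain ⟨p, hp, p', hp', h⟩ := exists_dmin_eq_dist hAne hne'
    obtain ⟨q, hq, hqA⟩ := Finset.exists_of_ssubset hA
    rw [h]
    exact (dmin_le_dist hp (Finset.mem_sdiff.2 ⟨hq, hqA⟩)).trans_lt
      (dist_lt_of_center_proximity hα (hprox i p (hA.1 hp) j hij.symm)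
        (hprox i q hq j hij.symm) (hprox j p' (hA' hp') i hij))
  exact ⟨key, (key _ subset_rfl (hne j)).le⟩
end

section
/- Let (M, d) be a metric space, let α ≥ 1 + √2 be a real number, and let p, p', q, c_i, c_j ∈ M be points satisfying the three inequalities: (1) d(p, p') + d(p', c_j) > α·d(p, c_i); (2) d(p, p') + d(p, c_i) > α·d(p', c_j); (3) d(p, p') + d(p', c_j) + d(p, q) > α·(d(q, p) − d(p, c_i)). Then d(p, p') > ((α² − 4α + 1)/(α − 1))·d(p, c_i) + d(q, p). In particular, for α ≥ 2 + √3 this yields d(p, p') > d(q, p). -/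
/-!
The bound is the linear combination of the three hypotheses with weights
`1 - 1/(α+1) - 1/(α-1)`, `1/(α+1)` and `1/(α-1)`, in which the terms in `dist p' cj` cancel.
The first weight is nonnegative exactly because `α ≥ 1 + √2`, and the other two are positive.
For `α ≥ 2 + √3` the coefficient of `dist p ci` in the bound is nonnegative, so that term can
be dropped.
-/

/-- **Key inequality in the proof that (2+√3)-center proximity implies min-stability for
general (Steiner-point) centers.**

Given points `p, p', q, c_i, c_j` of a metric space satisfying the three stated
inequalities (which follow from α-center proximity applied to `p`, `p'` and `q` together
with the triangle inequality), for `α ≥ 1 + √2` we get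
`d(p,p') > ((α² − 4α + 1)/(α − 1)) · d(p, c_i) + d(q, p)`;
in particular, for `α ≥ 2 + √3` this yields `d(p,p') > d(q,p)`. -/
theorem key_inequality_general_metric
    {M : Type*} [MetricSpace M] (α : ℝ) (hα : 1 + Real.sqrt 2 ≤ α)
    (p p' q ci cj : M)
    (h1 : dist p p' + dist p' cj > α * dist p ci)
    (h2 : dist p p' + dist p ci > α * dist p' cj)
    (h3 : dist p p' + dist p' cj + dist p q > α * (dist q p - dist p ci)) :
    dist p p' > ((α ^ 2 - 4 * α + 1) / (α - 1)) * dist p ci + dist q p ∧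
      (2 + Real.sqrt 3 ≤ α → dist p p' > dist q p) := by
  have hs2 : Real.sqrt 2 ^ 2 = 2 := Real.sq_sqrt (by norm_num)
  have hs2' : 0 ≤ Real.sqrt 2 := Real.sqrt_nonneg 2
  have hα1 : 0 < α - 1 := by nlinarith
  have hα2 : 0 < α + 1 := by linarith
  -- `α ^ 2 - 2 * α - 1 = (α - 1) ^ 2 - 2`, which is where `α ≥ 1 + √2` is used.
  have hcoef : 0 ≤ α ^ 2 - 2 * α - 1 := by nlinarith
  rw [dist_comm p q] at h3
  -- The combination with weights `1 - 1/(α+1) - 1/(α-1)`, `1/(α+1)`, `1/(α-1)`,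
  -- multiplied through by `(α + 1) * (α - 1)`.
  have e1 := mul_le_mul_of_nonneg_left h1.le hcoef
  have e2 := mul_lt_mul_of_pos_left h2 hα1
  have e3 := mul_lt_mul_of_pos_left h3 hα2
  have hcomb : 0 < (α + 1) *
      ((α - 1) * (dist p p' - dist q p) - (α ^ 2 - 4 * α + 1) * dist p ci) := by
    linarith
  have hpos := pos_of_mul_pos_right hcomb hα2.le
  have main : dist p p' > ((α ^ 2 - 4 * α + 1) / (α - 1)) * dist p ci + dist q p := by
    have : (α ^ 2 - 4 * α + 1) * dist p ci / (α - 1) < dist p p' - dist q p := by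
      rw [div_lt_iff₀ hα1]
      linarith
    rw [div_mul_eq_mul_div]
    linarith
  refine ⟨main, fun h => ?_⟩
  have hs3 : Real.sqrt 3 ^ 2 = 3 := Real.sq_sqrt (by norm_num)
  have hs3' : 0 ≤ Real.sqrt 3 := Real.sqrt_nonneg 3
  -- `α ^ 2 - 4 * α + 1 = (α - 2) ^ 2 - 3`
  have hnum : 0 ≤ α ^ 2 - 4 * α + 1 := by nlinarith
  have := mul_nonneg (div_nonneg hnum hα1.le) (dist_nonneg (x := p) (y := ci))
  linarith
end

section
/- Let (M, d) be a metric space, let α ≥ 3 be a real number, and let p, q, p', c_i, c_j ∈ M be points satisfying: d(q, c_i) ≥ d(p, p'), d(p, p') > 2·d(p, c_i), and d(p', c_i) > α·d(p', c_j). Then d(q, c_j) < 3·d(q, c_i); in particular d(q, c_j) < α·d(q, c_i), contradicting the α-center proximity inequality for q. -/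
/-- **Key chain of triangle-inequality estimates in the proof that 3-center proximity
implies min-stability when centers are data points.**

If `α ≥ 3`, `d(q, c_i) ≥ d(p, p')`, `d(p, p') > 2·d(p, c_i)` and
`d(p', c_i) > α·d(p', c_j)`, then `d(q, c_j) < 3·d(q, c_i)`; in particular
`d(q, c_j) < α·d(q, c_i)`, contradicting the α-center proximity inequality for `q`. -/
theorem key_inequality_data_point_centers
    {M : Type*} [MetricSpace M] (α : ℝ) (hα : 3 ≤ α)
    (p q p' ci cj : M)
    (h1 : dist q ci ≥ dist p p')
    (h2 : dist p p' > 2 * dist p ci)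
    (h3 : dist p' ci > α * dist p' cj) :
    dist q cj < 3 * dist q ci ∧ dist q cj < α * dist q ci := by
  -- `d(p', cᵢ) ≤ d(p, p') + d(p, cᵢ) < (3/2) d(q, cᵢ)`, so `α ≥ 3` gives `d(p', cⱼ) < d(q, cᵢ)/2`.
  have hci : dist p' ci ≤ dist p p' + dist p ci := by
    simpa only [dist_comm p' p] using dist_triangle p' p ci
  have hcj : 3 * dist p' cj ≤ α * dist p' cj :=
    mul_le_mul_of_nonneg_right hα dist_nonneg
  -- The path `q → cᵢ → p → p' → cⱼ` has length less than `(1 + 1/2 + 1 + 1/2) d(q, cᵢ)`.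
  have hpath : dist q cj ≤ dist q ci + dist p ci + dist p p' + dist p' cj := by
    have t1 := dist_triangle4 q ci p p'
    have t2 := dist_triangle q p' cj
    rw [dist_comm ci p] at t1
    linarith
  have hlt : dist q cj < 3 * dist q ci := by linarith
  exact ⟨hlt, hlt.trans_le (mul_le_mul_of_nonneg_right hα dist_nonneg)⟩
end

section
/- Let (X, d) be a finite metric space and let α ≥ 3. Suppose the k-median instance on X (with centers required to be data points) is α-perturbation resilient: for every function d' : X × X → ℝ≥0 with d(x,y) ≤ d'(x,y) ≤ α·d(x,y) for all x, y, every k-median-cost-minimizing clustering under d' induces the same partition of X as the unique optimal k-median clustering under d. Then the optimal k-median clustering C_1, …, C_k under d satisfies the min-stability property: for any two distinct clusters C_i, C_j and any nonempty proper subset A ⊊ C_i, d_min(A, C_i \ A) ≤ d_min(A, C_j), where d_min(A, B) = min { d(a, b) : a ∈ A, b ∈ B }. -/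
/-- `(σ, c)` is a clustering into `k` nonempty clusters minimizing the `k`-median cost for `d`. -/
def IsOptimal {X : Type*} [Fintype X] {k : ℕ} (d : X → X → ℝ) (σ : X → Fin k)
    (c : Fin k → X) : Prop :=
  Function.Surjective σ ∧ ∀ (σ₂ : X → Fin k) (c₂ : Fin k → X), Function.Surjective σ₂ →
    ∑ p : X, d p (c (σ p)) ≤ ∑ p : X, d p (c₂ (σ₂ p))

theorem exists_isOptimal {X : Type*} [Fintype X] {k : ℕ} (d : X → X → ℝ)
    (σ₀ : X → Fin k) (c₀ : Fin k → X) (h₀ : Function.Surjective σ₀) :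
    ∃ (σ : X → Fin k) (c : Fin k → X), IsOptimal d σ c := by
  classical
  let T := {s : (X → Fin k) × (Fin k → X) // Function.Surjective s.1}
  have : Nonempty T := ⟨⟨(σ₀, c₀), h₀⟩⟩
  obtain ⟨⟨⟨σ, c⟩, hs⟩, hmin⟩ :=
    Finite.exists_min (fun s : T => ∑ p : X, d p (s.1.2 (s.1.1 p)))
  exact ⟨σ, c, hs, fun σ₂ c₂ h₂ => hmin ⟨(σ₂, c₂), h₂⟩⟩

/-- Reassigning a point `x` to another cluster keeps all clusters nonempty as long as the old
cluster of `x` contains a second point `y`. -/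
theorem surjective_update {X : Type*} [DecidableEq X] {k : ℕ} {σ : X → Fin k}
    (hσ : Function.Surjective σ) {x y : X} (hyx : y ≠ x) (hy : σ y = σ x) (a : Fin k) :
    Function.Surjective (Function.update σ x a) := by
  intro e
  obtain ⟨z, hz⟩ := hσ e
  by_cases hzx : z = x
  · exact ⟨y, by rw [Function.update_of_ne hyx, hy, ← hzx, hz]⟩
  · exact ⟨z, by rw [Function.update_of_ne hzx, hz]⟩

theorem center_of_singleton_s7 {X : Type*} [Fintype X] {k : ℕ} {d : X → X → ℝ}
    (hd0 : ∀ x, d x x = 0) (hpos : ∀ x y, x ≠ y → 0 < d x y)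
    {σ : X → Fin k} {c : Fin k → X} (h : IsOptimal d σ c) (x : X)
    (hx : ∀ z, σ z = σ x → z = x) : c (σ x) = x := by
  by_contra hne
  refine absurd (h.2 σ (Function.update c (σ x) x) h.1) (not_le.mpr ?_)
  refine Finset.sum_lt_sum (fun p _ => ?_) ⟨x, Finset.mem_univ _, ?_⟩
  · by_cases hp : σ p = σ x
    · obtain rfl := hx p hp
      rw [Function.update_self, hd0]
      exact (hpos _ _ (Ne.symm hne)).le
    · rw [Function.update_of_ne hp]
  · rw [Function.update_self, hd0]
    exact hpos _ _ (Ne.symm hne)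

/-- If all optimal clusterings induce the same partition, then every optimal center lies in its
own cluster: a center in a foreign cluster could be moved to the cluster it serves at no cost,
unless that foreign cluster is a singleton. In that case both clusters share the same center, so
the served cluster is a singleton as well (its points could be moved to the other cluster at no
cost), and then its center would have to be its only point. -/
theorem center_mem {X : Type*} [Fintype X] {k : ℕ} {d : X → X → ℝ}
    (hd0 : ∀ x, d x x = 0) (hpos : ∀ x y, x ≠ y → 0 < d x y)
    {σ : X → Fin k} {c : Fin k → X} (h : IsOptimal d σ c)
    (huniq : ∀ (σ₂ : X → Fin k) (c₂ : Fin k → X), IsOptimal d σ₂ c₂ →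
      ∀ p q, σ₂ p = σ₂ q ↔ σ p = σ q) (a : Fin k) : σ (c a) = a := by
  classical
  by_contra hba
  -- A point that can be moved to another cluster at no cost must be alone in its cluster.
  have move : ∀ (x : X) (e : Fin k), e ≠ σ x → d x (c e) ≤ d x (c (σ x)) →
      ∀ y, σ y = σ x → y = x := by
    intro x e he hle y hy
    by_contra hyx
    have hopt : IsOptimal d (Function.update σ x e) c := by
      refine ⟨surjective_update h.1 hyx hy e, fun σ₂ c₂ h₂ => le_trans ?_ (h.2 σ₂ c₂ h₂)⟩
      refine Finset.sum_le_sum fun p _ => ?_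
      by_cases hp : p = x
      · subst hp; rwa [Function.update_self]
      · rw [Function.update_of_ne hp]
    have := (huniq _ c hopt y x).2 hy
    rw [Function.update_of_ne hyx, Function.update_self, hy] at this
    exact he this.symm
  have hnn : ∀ x y, 0 ≤ d x y := fun x y => by
    by_cases hxy : x = y
    · rw [hxy, hd0]
    · exact (hpos x y hxy).le
  have hb : c (σ (c a)) = c a := center_of_singleton_s7 hd0 hpos h (c a)
    (move (c a) a (Ne.symm hba) (by rw [hd0]; exact hnn _ _))
  obtain ⟨y, hy⟩ := h.1 a
  have ha : c (σ y) = y := center_of_singleton_s7 hd0 hpos h y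
    (move y (σ (c a)) (by rwa [hy]) (by rw [hb, hy]))
  rw [hy] at ha
  rw [ha, hy] at hba
  exact hba rfl

/-- Perturbation resilience implies center proximity; see the comment at the top of the file.
The last component of the conclusion records that optimal centers lie in their own clusters. -/
theorem center_proximity {X : Type*} [Fintype X] [MetricSpace X]
    {k : ℕ} {α : ℝ} (hα : 1 ≤ α) {σ : X → Fin k} {c : Fin k → X}
    (hopt : IsOptimal dist σ c)
    (hres : ∀ d' : X → X → ℝ,
      (∀ x y : X, dist x y ≤ d' x y ∧ d' x y ≤ α * dist x y) →
      ∀ (σ₂ : X → Fin k) (c₂ : Fin k → X), IsOptimal d' σ₂ c₂ →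
        ∀ p q : X, σ₂ p = σ₂ q ↔ σ p = σ q) :
    (∀ p j, j ≠ σ p → α * dist p (c (σ p)) < dist p (c j)) ∧ ∀ a, σ (c a) = a := by
  classical
  have hle : ∀ x y : X, dist x y ≤ α * dist x y := fun x y =>
    le_mul_of_one_le_left dist_nonneg hα
  have hmem : ∀ d' : X → X → ℝ, (∀ x y : X, dist x y ≤ d' x y ∧ d' x y ≤ α * dist x y) →
      ∀ (σ₂ : X → Fin k) (c₂ : Fin k → X), IsOptimal d' σ₂ c₂ → ∀ a, σ₂ (c₂ a) = a := by
    intro d' hd' σ₂ c₂ h₂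
    refine center_mem (fun x => ?_) (fun x y hxy => ?_) h₂ (fun σ₃ c₃ h₃ p q => ?_)
    · have := hd' x x
      simp only [dist_self, mul_zero] at this
      exact le_antisymm this.2 this.1
    · exact (dist_pos.2 hxy).trans_le (hd' x y).1
    · rw [hres d' hd' σ₃ c₃ h₃, hres d' hd' σ₂ c₂ h₂]
  have hc : ∀ a, σ (c a) = a := hmem dist (fun x y => ⟨le_rfl, hle x y⟩) σ c hopt
  refine ⟨fun p j hj => ?_, hc⟩
  by_contra! hcon
  -- Since `p` and `c j` are distinct, the assumption forces `p` not to be its own center.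
  have hpc : c (σ p) ≠ p := by
    intro hp
    rw [hp, dist_self, mul_zero] at hcon
    have : p = c j := dist_le_zero.1 hcon
    exact hj (by rw [this, hc])
  let d' : X → X → ℝ := fun x y => if x = p ∧ y = c j then dist x y else α * dist x y
  have hd' : ∀ x y : X, dist x y ≤ d' x y ∧ d' x y ≤ α * dist x y := by
    intro x y
    by_cases hxy : x = p ∧ y = c j
    · simp only [d', if_pos hxy]; exact ⟨le_rfl, hle x y⟩
    · simp only [d', if_neg hxy]; exact ⟨hle x y, le_rfl⟩
  obtain ⟨σ₁, c₁, h₁⟩ := exists_isOptimal d' σ c hopt.1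
  have hpart := hres d' hd' σ₁ c₁ h₁
  have hcost₁ : α * ∑ q, dist q (c (σ q)) ≤ ∑ q, d' q (c₁ (σ₁ q)) := by
    have heq : ∑ q, d' q (c₁ (σ₁ q)) = α * ∑ q, dist q (c₁ (σ₁ q)) := by
      rw [Finset.mul_sum]
      refine Finset.sum_congr rfl fun q _ => if_neg ?_
      rintro ⟨rfl, hq⟩
      have h2 : σ₁ (c j) = σ₁ q := by rw [← hq, hmem d' hd' σ₁ c₁ h₁]
      exact hj (by rw [← (hpart _ _).1 h2, hc])
    rw [heq]
    exact mul_le_mul_of_nonneg_left (hopt.2 σ₁ c₁ h₁.1) (by linarith)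
  have h₂ : IsOptimal d' (Function.update σ p j) c := by
    refine ⟨surjective_update hopt.1 hpc (hc _) j, fun σ₃ c₃ h₃ => ?_⟩
    refine le_trans (le_trans ?_ hcost₁) (h₁.2 σ₃ c₃ h₃)
    rw [Finset.mul_sum]
    refine Finset.sum_le_sum fun q _ => ?_
    by_cases hq : q = p
    · subst hq
      rw [Function.update_self]
      simpa only [d', and_self, if_true] using hcon
    · rw [Function.update_of_ne hq]
      exact (hd' _ _).2
  have := (hres d' hd' _ c h₂ (c (σ p)) p).2 (hc _)
  rw [Function.update_of_ne hpc, Function.update_self, hc] at this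
  exact hj this.symm

/-- A form of `dmin A B ≤ dmin A C` that only needs, for every pair in `A × C`, a pair in `A × B`
at most as far apart. Nonemptiness of `A` and `C` excludes the junk value `sInf ∅ = 0`. -/
theorem dmin_le_dmin {M : Type*} [MetricSpace M] {A B C : Finset M}
    (hA : A.Nonempty) (hC : C.Nonempty)
    (h : ∀ a ∈ A, ∀ b ∈ C, ∃ a' ∈ A, ∃ b' ∈ B, dist a' b' ≤ dist a b) :
    dmin A B ≤ dmin A C := by
  obtain ⟨a₀, ha₀⟩ := hA
  obtain ⟨b₀, hb₀⟩ := hC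
  refine le_csInf ⟨_, a₀, ha₀, b₀, hb₀, rfl⟩ ?_
  rintro r ⟨a, ha, b, hb, rfl⟩
  obtain ⟨a', ha', b', hb', hle⟩ := h a ha b hb
  refine le_trans ?_ hle
  refine csInf_le ⟨0, ?_⟩ ⟨a', ha', b', hb', rfl⟩
  rintro r ⟨x, _, y, _, rfl⟩
  exact dist_nonneg

/-- **α-perturbation resilience (α ≥ 3) implies min-stability of the optimal k-median
clustering, for finite metrics with data-point centers.**

A clustering of a finite metric space `X` into `k` nonempty clusters is modeled by a
surjective assignment `σ : X → Fin k` together with centers `c : Fin k → X`; its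
k-median cost under a distance function `d'` is `∑ p, d' p (c (σ p))`. Suppose
`σopt, copt` is a cost-minimizing clustering under `dist` and the instance is
α-perturbation resilient: for every `d'` with `dist x y ≤ d' x y ≤ α * dist x y`,
every cost-minimizing clustering under `d'` induces the same partition of `X` as `σopt`.
Then, writing `C i = {p | σopt p = i}` for the optimal clusters, for any two distinct
clusters and any nonempty proper subset `A ⊊ C i` we have
`d_min(A, C i \ A) ≤ d_min(A, C j)`. -/
theorem perturbation_resilience_implies_min_stability_kmedian
    {X : Type*} [Fintype X] [DecidableEq X] [MetricSpace X]
    (k : ℕ) (α : ℝ) (hα : 3 ≤ α)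
    (σopt : X → Fin k) (copt : Fin k → X)
    (hopt_surj : Function.Surjective σopt)
    (hopt_min : ∀ (σ : X → Fin k) (c : Fin k → X), Function.Surjective σ →
      ∑ p : X, dist p (copt (σopt p)) ≤ ∑ p : X, dist p (c (σ p)))
    (hresilient : ∀ d' : X → X → ℝ,
      (∀ x y : X, dist x y ≤ d' x y ∧ d' x y ≤ α * dist x y) →
      ∀ (σ : X → Fin k) (c : Fin k → X), Function.Surjective σ →
        (∀ (σ₂ : X → Fin k) (c₂ : Fin k → X), Function.Surjective σ₂ →
          ∑ p : X, d' p (c (σ p)) ≤ ∑ p : X, d' p (c₂ (σ₂ p))) →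
        ∀ p q : X, σ p = σ q ↔ σopt p = σopt q)
    (i j : Fin k) (hij : i ≠ j)
    (A : Finset X) (hA : A ⊂ Finset.univ.filter (fun p => σopt p = i))
    (hAne : A.Nonempty) :
    dmin A ((Finset.univ.filter (fun p => σopt p = i)) \ A) ≤
      dmin A (Finset.univ.filter (fun p => σopt p = j)) := by
  obtain ⟨hprox, hc⟩ := center_proximity (by linarith) ⟨hopt_surj, hopt_min⟩
    (fun d' hd' σ₂ c₂ h₂ => hresilient d' hd' σ₂ c₂ h₂.1 h₂.2)
  have hprox3 : ∀ p l, l ≠ σopt p → 3 * dist p (copt (σopt p)) ≤ dist p (copt l) :=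
    fun p l hl => (mul_le_mul_of_nonneg_right hα dist_nonneg).trans (hprox p l hl).le
  refine dmin_le_dmin hAne ⟨copt j, by simp [hc]⟩ fun a ha b hb => ?_
  have hai : σopt a = i := by simpa using hA.1 ha
  have hbj : σopt b = j := by simpa using hb
  have h1 := hprox3 a j (by rw [hai]; exact hij.symm)
  have h2 := hprox3 b i (by rw [hbj]; exact hij)
  rw [hai] at h1
  rw [hbj] at h2
  have t1 := dist_triangle a b (copt j)
  have t2 := dist_triangle b a (copt i)
  rw [dist_comm b a] at t2
  by_cases hci : copt i ∈ A
  · obtain ⟨q, hq, hqA⟩ := Finset.exists_of_ssubset hA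
    have hqi : σopt q = i := by simpa using hq
    refine ⟨copt i, hci, q, Finset.mem_sdiff.2 ⟨hq, hqA⟩, ?_⟩
    have h3 := hprox3 q j (by rw [hqi]; exact hij.symm)
    rw [hqi] at h3
    have t3 := dist_triangle q (copt i) (copt j)
    have t4 := dist_triangle (copt i) a (copt j)
    rw [dist_comm (copt i) a] at t4
    rw [dist_comm (copt i) q]
    linarith
  · refine ⟨a, ha, copt i, Finset.mem_sdiff.2 ⟨by simp [hc], hci⟩, ?_⟩
    linarith [dist_nonneg (x := a) (y := b)]
end

section
/- Let (X, d) be a finite metric space. A k-center clustering of X is a partition of X into k nonempty clusters, each with a designated center that is a point of X, and its cost under a (possibly perturbed) distance function d' is the maximum over all points p of d'(p, c) where c is the center of p's cluster. Suppose the instance is α-perturbation resilient for the k-center objective, i.e., for every function d' : X × X → ℝ≥0 with d(x,y) ≤ d'(x,y) ≤ α·d(x,y) for all x, y, every cost-minimizing clustering under d' induces the same partition of X as the (unique) optimal k-center clustering under d. Then for every point p, if c_i is the center of p's cluster in the optimal clustering under d and c_j is the center of any other cluster, then d(p, c_j) > α·d(p, c_i). -/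
/-!
Let `r` be the optimal cost. The stronger bound `dist p (copt j) > α * r` holds. If it fails, perturb
by scaling every distance by `α`, except that the distance from `p` to `copt j` is capped at `α * r`;
this is a legitimate perturbation because `dist p (copt j) ≤ α * r`. Capping at `α * r` cannot bring
any clustering below cost `α * r`, so every clustering of perturbed cost at most `α * r` is optimal
and must induce the original partition. Sending `p` to cluster `j` costs at most `α * r` and changes
the partition.

When `p` is alone in its cluster, moving it would leave that cluster empty. The cluster is then
refilled with a point `x` taken from a cluster with at least two points, `x` serving as its own
center. If there is no such cluster, all clusters are singletons, the optimal cost is `0`, and every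
point is its own center, so the claim reduces to `p ≠ copt j`.
-/

/-- **α-perturbation resilience implies α-center proximity, for the k-center objective
with data-point centers.**

A clustering of a finite metric space `X` into `k` nonempty clusters is modeled by a
surjective assignment `σ : X → Fin k` together with centers `c : Fin k → X`. Its
k-center cost under a distance function `d'` is `max_p d' p (c (σ p))`.

Hypotheses: `σopt, copt` is a k-center-cost-minimizing clustering under the metric `d = dist`,
and for every α-perturbation `d'` of `dist` (i.e. `dist x y ≤ d' x y ≤ α * dist x y`),
every cost-minimizing clustering under `d'` induces the same partition of `X` as `σopt`.

Conclusion: α-center proximity holds for the optimal clustering: for every point `p` and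
every cluster index `j` other than that of `p`'s cluster,
`dist p (copt j) > α * dist p (copt (σopt p))`. -/
theorem perturbation_resilience_implies_center_proximity_kcenter
    {X : Type*} [Fintype X] [Nonempty X] [MetricSpace X]
    (k : ℕ) (α : ℝ) (hα : 1 < α)
    (σopt : X → Fin k) (copt : Fin k → X)
    (hopt_surj : Function.Surjective σopt)
    (hopt_min : ∀ (σ : X → Fin k) (c : Fin k → X), Function.Surjective σ →
      Finset.univ.sup' Finset.univ_nonempty (fun p : X => dist p (copt (σopt p))) ≤
        Finset.univ.sup' Finset.univ_nonempty (fun p : X => dist p (c (σ p))))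
    (hresilient : ∀ d' : X → X → ℝ,
      (∀ x y : X, dist x y ≤ d' x y ∧ d' x y ≤ α * dist x y) →
      ∀ (σ : X → Fin k) (c : Fin k → X), Function.Surjective σ →
        (∀ (σ₂ : X → Fin k) (c₂ : Fin k → X), Function.Surjective σ₂ →
          Finset.univ.sup' Finset.univ_nonempty (fun p : X => d' p (c (σ p))) ≤
            Finset.univ.sup' Finset.univ_nonempty (fun p : X => d' p (c₂ (σ₂ p)))) →
        ∀ p q : X, σ p = σ q ↔ σopt p = σopt q)
    (p : X) (j : Fin k) (hj : j ≠ σopt p) :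
    dist p (copt j) > α * dist p (copt (σopt p)) := by
  classical
  set r := Finset.univ.sup' Finset.univ_nonempty (fun p : X => dist p (copt (σopt p))) with hr
  have hle : ∀ z, dist z (copt (σopt z)) ≤ r := fun z =>
    Finset.le_sup' (fun p : X => dist p (copt (σopt p))) (Finset.mem_univ z)
  have hα0 : 0 < α := by linarith
  by_cases hinj : Function.Injective σopt
  · -- All clusters are singletons: taking each point as its own center shows `r ≤ 0`.
    have hr0 : r ≤ 0 := by
      refine (hopt_min σopt (Function.surjInv hopt_surj) hopt_surj).trans ?_
      refine Finset.sup'_le _ _ fun z _ => ?_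
      rw [hinj (Function.surjInv_eq hopt_surj (σopt z)), dist_self]
    have hc : ∀ z, z = copt (σopt z) := fun z => dist_le_zero.1 ((hle z).trans hr0)
    obtain ⟨q, rfl⟩ := hopt_surj j
    rw [← hc p, ← hc q, dist_self, mul_zero]
    exact dist_pos.2 fun h => hj (by rw [h])
  suffices hstrong : α * r < dist p (copt j) from
    (mul_le_mul_of_nonneg_left (hle p) hα0.le).trans_lt hstrong
  by_contra! hcon
  have hr0 : 0 ≤ r := dist_nonneg.trans (hle p)
  let d' : X → X → ℝ := fun x y =>
    if x = p ∧ y = copt j then min (α * dist x y) (α * r) else α * dist x y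
  have hself : ∀ x y : X, dist x y ≤ α * dist x y := fun x y =>
    le_mul_of_one_le_left dist_nonneg hα.le
  have hpert : ∀ x y, dist x y ≤ d' x y ∧ d' x y ≤ α * dist x y := by
    intro x y
    by_cases h : x = p ∧ y = copt j
    · simp only [d', if_pos h]
      exact ⟨le_min (hself x y) (by rw [h.1, h.2]; exact hcon), min_le_left _ _⟩
    · simp only [d', if_neg h]
      exact ⟨hself x y, le_rfl⟩
  have hd_lt : ∀ x y, d' x y < α * r → dist x y < r := by
    intro x y h
    refine lt_of_mul_lt_mul_left ?_ hα0.le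
    by_cases hxy : x = p ∧ y = copt j
    · simp only [d', if_pos hxy] at h
      exact (min_lt_iff.1 h).resolve_right (lt_irrefl _)
    · simpa only [d', if_neg hxy] using h
  have hlower : ∀ (σ : X → Fin k) (c : Fin k → X), Function.Surjective σ →
      α * r ≤ Finset.univ.sup' Finset.univ_nonempty (fun z : X => d' z (c (σ z))) := by
    intro σ c hσ
    by_contra! h
    rw [Finset.sup'_lt_iff] at h
    refine (hopt_min σ c hσ).not_gt ?_
    rw [Finset.sup'_lt_iff]
    exact fun z hz => hd_lt _ _ (h z hz)
  have hkey : ∀ (σ : X → Fin k) (c : Fin k → X), Function.Surjective σ →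
      (∀ z, d' z (c (σ z)) ≤ α * r) → ∀ u v : X, σ u = σ v ↔ σopt u = σopt v :=
    fun σ c hσ h => hresilient d' hpert σ c hσ fun σ₂ c₂ hσ₂ =>
      (Finset.sup'_le _ _ fun z _ => h z).trans (hlower σ₂ c₂ hσ₂)
  have hdp : d' p (copt j) ≤ α * r := by simp [d']
  have hdz : ∀ z, d' z (copt (σopt z)) ≤ α * r := fun z =>
    (hpert _ _).2.trans (mul_le_mul_of_nonneg_left (hle z) hα0.le)
  by_cases hsing : ∃ p', p' ≠ p ∧ σopt p' = σopt p
  · obtain ⟨p', hp', hpp⟩ := hsing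
    obtain ⟨q, hq⟩ := hopt_surj j
    have hqp : q ≠ p := by rintro rfl; exact hj hq.symm
    have hsurj : Function.Surjective (Function.update σopt p j) := by
      intro m
      obtain ⟨z, rfl⟩ := hopt_surj m
      by_cases hz : z = p
      · exact ⟨p', by rw [Function.update_of_ne hp', hpp, hz]⟩
      · exact ⟨z, Function.update_of_ne hz _ _⟩
    have hpq := (hkey _ copt hsurj (fun z => by
      by_cases hz : z = p
      · rw [hz, Function.update_self]; exact hdp
      · rw [Function.update_of_ne hz]; exact hdz z) p q).1
        (by rw [Function.update_self, Function.update_of_ne hqp, hq])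
    exact hj (hq.symm.trans hpq.symm)
  · push Not at hsing
    simp only [Function.Injective, not_forall] at hinj
    obtain ⟨x, y, hxy, hne⟩ := hinj
    have hxp : x ≠ p := by rintro rfl; exact hsing y (Ne.symm hne) hxy.symm
    have hyp : y ≠ p := by rintro rfl; exact hsing x hne hxy
    set σ : X → Fin k := Function.update (Function.update σopt p j) x (σopt p) with hσdef
    set c : Fin k → X := Function.update copt (σopt p) x with hcdef
    have hσx : σ x = σopt p := by simp [σ]
    have hσp : σ p = j := by simp [σ, Ne.symm hxp]
    have hσz : ∀ z, z ≠ x → z ≠ p → σ z = σopt z := fun z h1 h2 => by simp [σ, h1, h2]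
    have hsurj : Function.Surjective σ := by
      intro m
      obtain ⟨z, rfl⟩ := hopt_surj m
      by_cases hzp : z = p
      · exact ⟨x, by rw [hσx, hzp]⟩
      by_cases hzx : z = x
      · exact ⟨y, by rw [hσz y (Ne.symm hne) hyp, hzx, hxy]⟩
      · exact ⟨z, hσz z hzx hzp⟩
    have hcost : ∀ z, d' z (c (σ z)) ≤ α * r := by
      intro z
      by_cases hzp : z = p
      · rw [hzp, hσp, hcdef, Function.update_of_ne hj]; exact hdp
      by_cases hzx : z = x
      · rw [hzx, hσx, hcdef, Function.update_self]
        refine (hpert x x).2.trans ?_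
        rw [dist_self, mul_zero]
        exact mul_nonneg hα0.le hr0
      · rw [hσz z hzx hzp, hcdef, Function.update_of_ne (hsing z hzp)]; exact hdz z
    have h := (hkey σ c hsurj hcost x y).2 hxy
    rw [hσx, hσz y (Ne.symm hne) hyp] at h
    exact hsing y hyp h.symm
end
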